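/- Let z(s) : [a,b] → ℂ be an arc-length parametrization of a Dini-smooth Jordan arc γ. For every ε > 0 there exists δ > 0 such that for every point ζ ∈ ℂ ∖ γ and every interval I ⊂ [a,b] of length |I| < δ, the total variation over I of any continuous branch of the argument s ↦ arg(z(s) − ζ) is at most π + ε. -/

import Mathlib

open Filter Topology MeasureTheory Set

noncomputable section

/-- The supremum norm of `f` over the set `Γ`. -/
def supNorm (Γ : Set ℂ) (f : ℂ → ℂ) : ℝ := sSup ((fun z => ‖f z‖) '' Γ)

/-- `Γ` is a Jordan curve: the image of a continuous `2π`-periodic map `ℝ → ℂ` that is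
injective modulo the period. -/
def IsJordanCurve (Γ : Set ℂ) : Prop :=
  ∃ f : ℝ → ℂ, Continuous f ∧ Function.Periodic f (2 * Real.pi) ∧
    (∀ s t : ℝ, f s = f t → ∃ n : ℤ, t - s = n * (2 * Real.pi)) ∧
    Γ = Set.range f

/-- The modulus of continuity of `g` on the interval `[a, b]`, evaluated at `t`. -/
def modCont (g : ℝ → ℂ) (a b t : ℝ) : ℝ :=
  sSup {d : ℝ | ∃ s₁ ∈ Set.Icc a b, ∃ s₂ ∈ Set.Icc a b, |s₁ - s₂| ≤ t ∧ d = ‖g s₁ - g s₂‖}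

/-- `γ`, with derivative `γ'`, parametrizes a Dini-smooth Jordan arc on `[a, b]`:
`γ'` is continuous and nonvanishing on `[a, b]` and its modulus of continuity `ω`
satisfies `∫₀¹ ω(t)/t dt < ∞`. -/
structure IsDiniSmoothArc (γ γ' : ℝ → ℂ) (a b : ℝ) : Prop where
  lt : a < b
  inj : Set.InjOn γ (Set.Icc a b)
  deriv : ∀ s ∈ Set.Icc a b, HasDerivWithinAt γ (γ' s) (Set.Icc a b) s
  cont : ContinuousOn γ' (Set.Icc a b)
  nonzero : ∀ s ∈ Set.Icc a b, γ' s ≠ 0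
  dini : MeasureTheory.IntegrableOn (fun t => modCont γ' a b t / t) (Set.Ioc (0 : ℝ) 1)

/-- A piecewise Dini-smooth Jordan curve: a Jordan curve which is the union of finitely many
Dini-smooth arcs. -/
def IsPiecewiseDiniSmoothJordanCurve (Γ : Set ℂ) : Prop :=
  IsJordanCurve Γ ∧
    ∃ (N : ℕ) (γ γ' : Fin N → ℝ → ℂ) (a b : Fin N → ℝ),
      (∀ i, IsDiniSmoothArc (γ i) (γ' i) (a i) (b i)) ∧
      Γ = ⋃ i, γ i '' Set.Icc (a i) (b i)

/-- The unbounded connected component `Ω` of the complement of `Γ` (in the finite plane). -/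
def exteriorDomain (Γ : Set ℂ) : Set ℂ :=
  {z | z ∈ Γᶜ ∧ ¬ Bornology.IsBounded (connectedComponentIn Γᶜ z)}

/-- `φ` is the canonical exterior conformal map of `Γ` onto `{|w| > 1}` with `φ(∞) = ∞` and
`φ(z)/z → c⁻¹` as `z → ∞`; the constant `c` is then the logarithmic capacity of `Γ`. -/
structure IsExteriorMap (Γ : Set ℂ) (φ : ℂ → ℂ) (c : ℝ) : Prop where
  cpos : 0 < c
  diff : DifferentiableOn ℂ φ (exteriorDomain Γ)
  bij : Set.BijOn φ (exteriorDomain Γ) {w : ℂ | 1 < ‖w‖}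
  tendsto : Filter.Tendsto (fun z => φ z / z)
    (Bornology.cobounded ℂ ⊓ Filter.principal (exteriorDomain Γ)) (nhds ((c : ℂ)⁻¹))

/-- `F` is the `n`-th Faber polynomial of `Γ`: the unique polynomial with
`φ(z)^n − F(z) → 0` as `z → ∞` in the exterior domain. -/
def IsFaberPoly (Γ : Set ℂ) (φ : ℂ → ℂ) (n : ℕ) (F : Polynomial ℂ) : Prop :=
  Filter.Tendsto (fun z => φ z ^ n - F.eval z)
    (Bornology.cobounded ℂ ⊓ Filter.principal (exteriorDomain Γ)) (nhds 0)

/-- `ψ` is the inverse of `φ`, extended to a homeomorphism of `{|w| ≥ 1}` onto the closure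
of the exterior domain; on the unit circle it parametrizes `Γ`. -/
structure IsExteriorParam (Γ : Set ℂ) (φ ψ : ℂ → ℂ) : Prop where
  cont : ContinuousOn ψ {w : ℂ | 1 ≤ ‖w‖}
  inj : Set.InjOn ψ {w : ℂ | 1 ≤ ‖w‖}
  inv : ∀ w : ℂ, 1 < ‖w‖ → ψ w ∈ exteriorDomain Γ ∧ φ (ψ w) = w
  boundary : ∀ w : ℂ, ‖w‖ = 1 → ψ w ∈ Γ
  boundary_surj : ∀ z ∈ Γ, ∃ w : ℂ, ‖w‖ = 1 ∧ ψ w = z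

/-- `T` is the `n`-th Chebyshev polynomial of `Γ`: the monic polynomial of degree `n`
minimizing the supremum norm over `Γ`. -/
def IsChebyshevPoly (Γ : Set ℂ) (n : ℕ) (T : Polynomial ℂ) : Prop :=
  T.Monic ∧ T.natDegree = n ∧
    ∀ P : Polynomial ℂ, P.Monic → P.natDegree = n →
      supNorm Γ (fun z => T.eval z) ≤ supNorm Γ (fun z => P.eval z)

/-- `v` is a secant-argument function of `Γ = ψ(unit circle)` at `θ` (relative to `α` with
`α < θ < α + 2π`): a bounded-variation branch of `t ↦ arg (ψ(e^{it}) − ψ(e^{iθ}))` on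
`[α, α + 2π]`, continuous on `[α, θ)` and on `(θ, α + 2π]`, normalized by `v θ = v(θ+)`
and by requiring the jump `v(θ+) − v(θ−)` to lie in `[0, 2π]`. -/
structure IsSecantArg (ψ : ℂ → ℂ) (θ α : ℝ) (v : ℝ → ℝ) : Prop where
  hα : α < θ
  hθ : θ < α + 2 * Real.pi
  bv : BoundedVariationOn v (Set.Icc α (α + 2 * Real.pi))
  contBefore : ContinuousOn v (Set.Ico α θ)
  contAfter : ContinuousOn v (Set.Ioc θ (α + 2 * Real.pi))
  rightCont : ContinuousWithinAt v (Set.Ici θ) θ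
  jump_mem : ∃ L : ℝ, Filter.Tendsto v (nhdsWithin θ (Set.Iio θ)) (nhds L) ∧
    v θ - L ∈ Set.Icc 0 (2 * Real.pi)
  branch : ∀ t ∈ Set.Icc α (α + 2 * Real.pi), t ≠ θ →
    Complex.exp (Complex.I * (v t : ℂ))
      = (ψ (Complex.exp (Complex.I * (t : ℂ))) - ψ (Complex.exp (Complex.I * (θ : ℂ))))
        / ((‖ψ (Complex.exp (Complex.I * (t : ℂ))) - ψ (Complex.exp (Complex.I * (θ : ℂ)))‖ : ℂ))

/-- The exterior angle of `Γ = ψ(unit circle)` at the boundary point `ψ(e^{iθ})` equals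
`lam * π`, expressed through the jump `v(θ+) − v(θ−) = lam * π` of a secant-argument
function at `θ`. -/
def HasExteriorAngleAt (ψ : ℂ → ℂ) (θ lam : ℝ) : Prop :=
  ∃ (α : ℝ) (v : ℝ → ℝ), IsSecantArg ψ θ α v ∧
    Filter.Tendsto v (nhdsWithin θ (Set.Iio θ)) (nhds (v θ - lam * Real.pi))

/-- The set `Θ_Γ = {θ_k + 2πj}` of corner parameters modulo `2π`. -/
def cornerSet {l : ℕ} (θk : Fin l → ℝ) : Set ℝ :=
  {x | ∃ (k : Fin l) (j : ℤ), x = θk k + j * (2 * Real.pi)}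

/-- `(μp, μn)` realizes the Lebesgue–Stieltjes (signed) measure `dv` of `v` on `(α, β]`:
both are finite measures and `μp − μn` has the increments of `v`. -/
structure IsLSPair (v : ℝ → ℝ) (α β : ℝ) (μp μn : MeasureTheory.Measure ℝ) : Prop where
  finp : MeasureTheory.IsFiniteMeasure μp
  finn : MeasureTheory.IsFiniteMeasure μn
  incr : ∀ s t : ℝ, α ≤ s → s ≤ t → t ≤ β →
    (μp (Set.Ioc s t)).toReal - (μn (Set.Ioc s t)).toReal = v t - v s

/-!
Let `f = z - ζ`. A branch of `arg f` has derivative `Im (f' / f)`. Let `s₀` be the point of the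
interval at which `|f|` is smallest, and let `w` be the tangent line of `f` at `s₀`. Since
`|f s|` and `|w s|` are both at least `|f' s₀| |s - s₀| / 4` once the interval is short, the two
logarithmic derivatives differ by at most `C ω(|s - s₀|) / |s - s₀|`, with `C` independent of `ζ`.
The line contributes at most `π` to the variation of the argument, and by the Dini condition the
error term contributes less than `ε` on short intervals.
-/

section ModulusOfContinuity

variable {g : ℝ → ℂ} {a b t : ℝ}

lemma modCont_nonneg : 0 ≤ modCont g a b t := by
  refine Real.sSup_nonneg ?_
  rintro _ ⟨s₁, -, s₂, -, -, rfl⟩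
  exact norm_nonneg _

lemma norm_sub_le_modCont (hg : ContinuousOn g (Icc a b)) {s₁ s₂ : ℝ} (h₁ : s₁ ∈ Icc a b)
    (h₂ : s₂ ∈ Icc a b) (h : |s₁ - s₂| ≤ t) : ‖g s₁ - g s₂‖ ≤ modCont g a b t := by
  obtain ⟨K, hK⟩ := isCompact_Icc.exists_bound_of_continuousOn hg
  refine le_csSup ⟨K + K, ?_⟩ ⟨s₁, h₁, s₂, h₂, h, rfl⟩
  rintro _ ⟨x, hx, y, hy, -, rfl⟩
  exact norm_sub_le_of_le (hK x hx) (hK y hy)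

lemma monotone_modCont (hg : ContinuousOn g (Icc a b)) : Monotone (modCont g a b) := by
  refine fun t₁ t₂ ht => Real.sSup_le ?_ modCont_nonneg
  rintro _ ⟨s₁, h₁, s₂, h₂, h, rfl⟩
  exact norm_sub_le_modCont hg h₁ h₂ (h.trans ht)

lemma tendsto_modCont_zero (hg : ContinuousOn g (Icc a b)) :
    Tendsto (modCont g a b) (𝓝 0) (𝓝 0) := by
  refine tendsto_order.2 ⟨fun η hη => .of_forall fun t => hη.trans_le modCont_nonneg,
    fun η hη => ?_⟩
  obtain ⟨δ, hδ, h⟩ := Metric.uniformContinuousOn_iff.1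
    (isCompact_Icc.uniformContinuousOn_of_continuous hg) (η / 2) (half_pos hη)
  filter_upwards [Iio_mem_nhds hδ] with t ht
  refine (Real.sSup_le ?_ (half_pos hη).le).trans_lt (half_lt_self hη)
  rintro _ ⟨s₁, h₁, s₂, h₂, hs, rfl⟩
  rw [← dist_eq_norm]
  exact (h s₁ h₁ s₂ h₂ (hs.trans_lt ht)).le

end ModulusOfContinuity

section Variation

variable {E : Type*}

lemma eVariationOn_Icc_le_ofReal_sub {α : Type*} [LinearOrder α] [PseudoMetricSpace E]
    {f : α → E} {M : α → ℝ} {a b : α} (hab : a ≤ b)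
    (h : ∀ x ∈ Icc a b, ∀ y ∈ Icc a b, x ≤ y → dist (f y) (f x) ≤ M y - M x) :
    eVariationOn f (Icc a b) ≤ ENNReal.ofReal (M b - M a) := by
  have hM : MonotoneOn M (Icc a b) := fun x hx y hy hxy =>
    sub_nonneg.1 (dist_nonneg.trans (h x hx y hy hxy))
  calc eVariationOn f (Icc a b) ≤ eVariationOn M (Icc a b) := by
        refine iSup_mono fun p => Finset.sum_le_sum fun i _ => ?_
        rw [edist_dist, edist_dist]
        exact ENNReal.ofReal_le_ofReal ((h _ (p.2.2.2 i) _ (p.2.2.2 (i + 1))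
          (p.2.2.1 i.le_succ)).trans (le_abs_self _))
    _ = ENNReal.ofReal (M b - M a) := by
        simpa only [inter_self] using
          hM.eVariationOn_eq (left_mem_Icc.2 hab) (right_mem_Icc.2 hab)

lemma eVariationOn_Icc_le_ofReal_integral [NormedAddCommGroup E] [NormedSpace ℝ E]
    {f f' : ℝ → E} {φ : ℝ → ℝ} {a b : ℝ}
    (hf : ∀ x ∈ Icc a b, HasDerivWithinAt f (f' x) (Icc a b) x)
    (hφ : IntegrableOn φ (Icc a b)) (hle : ∀ x ∈ Icc a b, ‖f' x‖ ≤ φ x) :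
    eVariationOn f (Icc a b) ≤ ENNReal.ofReal (∫ x in Icc a b, φ x) := by
  rcases lt_or_ge b a with hba | hab
  · simp [Icc_eq_empty_of_lt hba]
  have hφi : ∀ x ∈ Icc a b, ∀ y ∈ Icc a b, IntervalIntegrable φ volume x y := fun x hx y hy =>
    (hφ.mono_set (ordConnected_Icc.uIcc_subset hx hy)).intervalIntegrable
  have ha : a ∈ Icc a b := left_mem_Icc.2 hab
  have hinc : ∀ x ∈ Icc a b, ∀ y ∈ Icc a b, x ≤ y →
      dist (f y) (f x) ≤ (∫ t in a..y, φ t) - ∫ t in a..x, φ t := by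
    intro x hx y hy hxy
    have hderiv : ∀ t ∈ Ioo x y, HasDerivAt f (f' t) t := fun t ht =>
      (hf t ⟨hx.1.trans ht.1.le, ht.2.le.trans hy.2⟩).hasDerivAt
        (Icc_mem_nhds (hx.1.trans_lt ht.1) (ht.2.trans_le hy.2))
    rw [dist_eq_norm, intervalIntegral.integral_interval_sub_left (hφi a ha y hy) (hφi a ha x hx)]
    refine norm_sub_le_integral_of_norm_deriv_le_of_le hxy
      (fun t ht => (hf t ⟨hx.1.trans ht.1, ht.2.trans hy.2⟩).continuousWithinAt.mono
        (Icc_subset_Icc hx.1 hy.2))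
      (fun t ht => (hderiv t ht).differentiableAt.differentiableWithinAt)
      (.of_forall fun t ht => ?_) (hφi x hx y hy)
    rw [(hderiv t ht).deriv]
    exact hle t ⟨hx.1.trans ht.1.le, ht.2.le.trans hy.2⟩
  simpa only [intervalIntegral.integral_same, sub_zero, intervalIntegral.integral_of_le hab,
    integral_Icc_eq_integral_Ioc] using
    eVariationOn_Icc_le_ofReal_sub (M := fun x => ∫ t in a..x, φ t) hab hinc

end Variation

section Integrals

lemma integrable_comp_abs {E : Type*} [NormedAddCommGroup E] {F : ℝ → E}
    (hF : IntegrableOn F (Ioi 0)) : Integrable fun x => F |x| := by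
  have hpos : IntegrableOn (fun x => F |x|) (Ici 0) :=
    (Iff.mpr integrableOn_Ici_iff_integrableOn_Ioi hF).congr_fun
      (fun x hx => by rw [abs_of_nonneg hx]) measurableSet_Ici
  have hneg : IntegrableOn (fun x => F |x|) (Iic 0) := by
    have h := IntegrableOn.comp_neg_Iic (c := (0 : ℝ)) (by rwa [neg_zero])
    simpa only [abs_neg] using h
  rw [← integrableOn_univ, ← Iic_union_Ici (a := (0 : ℝ))]
  exact hneg.union hpos

lemma indicator_Icc_comp_abs_sub {E : Type*} [Zero E] (ψ : ℝ → E) (r s₀ : ℝ) :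
    (Icc (s₀ - r) (s₀ + r)).indicator (fun s => ψ |s - s₀|) =
      fun s => (Iic r).indicator ψ |s - s₀| := by
  ext s
  simp only [indicator_apply, mem_Icc, mem_Iic, abs_le, neg_le_sub_iff_le_add, sub_le_iff_le_add,
    add_comm]

lemma integrableOn_comp_abs_sub {E : Type*} [NormedAddCommGroup E] {ψ : ℝ → E} {r : ℝ}
    (hψ : IntegrableOn ψ (Ioc 0 r)) (s₀ : ℝ) :
    IntegrableOn (fun s => ψ |s - s₀|) (Icc (s₀ - r) (s₀ + r)) := by
  rw [← integrable_indicator_iff measurableSet_Icc, indicator_Icc_comp_abs_sub]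
  have h : IntegrableOn ((Iic r).indicator ψ) (Ioi 0) := by
    rwa [IntegrableOn, integrable_indicator_iff measurableSet_Iic, IntegrableOn,
      Measure.restrict_restrict measurableSet_Iic, inter_comm, Ioi_inter_Iic]
  exact (integrable_comp_abs h).comp_sub_right s₀

lemma setIntegral_comp_abs_sub (ψ : ℝ → ℝ) (r s₀ : ℝ) :
    ∫ s in Icc (s₀ - r) (s₀ + r), ψ |s - s₀| = 2 * ∫ t in Ioc 0 r, ψ t := by
  rw [← integral_indicator measurableSet_Icc, indicator_Icc_comp_abs_sub,
    integral_sub_right_eq_self (fun s => (Iic r).indicator ψ |s|), integral_comp_abs,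
    setIntegral_indicator measurableSet_Iic, Ioi_inter_Iic]

lemma Icc_subset_Icc_sub_add {c d s₀ : ℝ} (hs₀ : s₀ ∈ Icc c d) :
    Icc c d ⊆ Icc (s₀ - (d - c)) (s₀ + (d - c)) :=
  Icc_subset_Icc (by linarith [hs₀.2]) (by linarith [hs₀.1])

lemma setIntegral_Icc_comp_abs_sub_le {ψ : ℝ → ℝ} {c d s₀ : ℝ} (hs₀ : s₀ ∈ Icc c d)
    (hψ : IntegrableOn ψ (Ioc 0 (d - c))) (hψ_nonneg : ∀ t, 0 ≤ t → 0 ≤ ψ t) :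
    ∫ s in Icc c d, ψ |s - s₀| ≤ 2 * ∫ t in Ioc 0 (d - c), ψ t := by
  rw [← setIntegral_comp_abs_sub ψ (d - c) s₀]
  exact setIntegral_mono_set (integrableOn_comp_abs_sub hψ s₀)
    (.of_forall fun s => hψ_nonneg _ (abs_nonneg _)) (Icc_subset_Icc_sub_add hs₀).eventuallyLE

lemma tendsto_setIntegral_Ioc_nhdsGT {E : Type*} [NormedAddCommGroup E] [NormedSpace ℝ E]
    {f : ℝ → E} {a b : ℝ} (hab : a < b) (hf : IntegrableOn f (Ioc a b)) :
    Tendsto (fun x => ∫ t in Ioc a x, f t) (𝓝[>] a) (𝓝 0) := by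
  have hf' : IntegrableOn f (Icc a b) := Iff.mpr integrableOn_Icc_iff_integrableOn_Ioc hf
  have h := (intervalIntegral.continuousOn_primitive hf' a (left_mem_Icc.2 hab.le)).mono
    Ioc_subset_Icc_self
  rwa [ContinuousWithinAt, nhdsWithin_Ioc_eq_nhdsGT hab, Ioc_self, setIntegral_empty] at h

lemma abs_im_inv_ofReal_sub (x : ℝ) (ξ : ℂ) :
    |((x - ξ : ℂ)⁻¹).im| =
      Real.pi * ProbabilityTheory.cauchyPDFReal ξ.re ‖ξ.im‖₊ x := by
  rw [Complex.inv_im, abs_div, abs_of_nonneg (Complex.normSq_nonneg _), Complex.normSq_apply,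
    ProbabilityTheory.cauchyPDFReal_def]
  simp only [Complex.sub_im, Complex.ofReal_im, zero_sub, neg_neg, Complex.sub_re,
    Complex.ofReal_re, mul_neg, neg_mul, coe_nnnorm, Real.norm_eq_abs, sq_abs]
  field_simp

lemma div_add_mul_eq_inv_sub {K : Type*} [Field K] {v : K} (hv : v ≠ 0) (w x : K) :
    v / (w + x * v) = (x - -w / v)⁻¹ := by
  rw [← inv_div]
  congr 1
  field_simp
  ring

lemma integrable_abs_im_div_add_mul (w v : ℂ) :
    Integrable fun x : ℝ => |(v / (w + x * v)).im| := by
  rcases eq_or_ne v 0 with rfl | hv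
  · simp
  simp_rw [div_add_mul_eq_inv_sub hv, abs_im_inv_ofReal_sub]
  fun_prop

lemma integral_abs_im_div_add_mul_le_pi (w v : ℂ) :
    ∫ x : ℝ, |(v / (w + x * v)).im| ≤ Real.pi := by
  rcases eq_or_ne v 0 with rfl | hv
  · simp [Real.pi_nonneg]
  simp_rw [div_add_mul_eq_inv_sub hv, abs_im_inv_ofReal_sub, integral_const_mul]
  rcases eq_or_ne ‖(-w / v).im‖₊ 0 with h | h
  · simp [h, Real.pi_nonneg]
  · rw [ProbabilityTheory.integral_cauchyPDFReal_eq_one _ h, mul_one]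

lemma integrable_abs_im_div_add_sub_mul (w v : ℂ) (s₀ : ℝ) :
    Integrable fun s : ℝ => |(v / (w + (s - s₀ : ℝ) * v)).im| :=
  (integrable_abs_im_div_add_mul w v).comp_sub_right s₀

lemma setIntegral_abs_im_div_add_sub_mul_le_pi (w v : ℂ) (s₀ : ℝ) (S : Set ℝ) :
    ∫ s in S, |(v / (w + (s - s₀ : ℝ) * v)).im| ≤ Real.pi := calc
  ∫ s in S, |(v / (w + (s - s₀ : ℝ) * v)).im|
      ≤ ∫ s : ℝ, |(v / (w + (s - s₀ : ℝ) * v)).im| :=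
    setIntegral_le_integral (integrable_abs_im_div_add_sub_mul w v s₀)
      (.of_forall fun _ => abs_nonneg _)
  _ = ∫ x : ℝ, |(v / (w + x * v)).im| :=
    integral_sub_right_eq_self (fun x : ℝ => |(v / (w + x * v)).im|) s₀
  _ ≤ Real.pi := integral_abs_im_div_add_mul_le_pi w v

end Integrals

/-- `A` is a continuous branch on `S` of the argument of `f`. As `exp (I * A x)` never vanishes
and division by zero yields zero, this entails that `f` has no zero on `S`. -/
structure IsArgBranchOn {X : Type*} [TopologicalSpace X] (A : X → ℝ) (f : X → ℂ) (S : Set X) :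
    Prop where
  continuousOn : ContinuousOn A S
  exp_eq : ∀ x ∈ S, Complex.exp (Complex.I * (A x : ℂ)) = f x / ((‖f x‖ : ℝ) : ℂ)

namespace IsArgBranchOn

section

variable {X : Type*} [TopologicalSpace X] {A : X → ℝ} {f : X → ℂ} {S : Set X} {x y : X}

lemma ne_zero (hA : IsArgBranchOn A f S) (hx : x ∈ S) : f x ≠ 0 := by
  intro h
  simpa [h] using hA.exp_eq x hx

lemma norm_mul_exp (hA : IsArgBranchOn A f S) (hx : x ∈ S) :
    (‖f x‖ : ℂ) * Complex.exp (A x * Complex.I) = f x := by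
  rw [mul_comm (A x : ℂ), hA.exp_eq x hx, mul_div_cancel₀]
  exact_mod_cast norm_ne_zero_iff.2 (hA.ne_zero hx)

lemma arg_div (hA : IsArgBranchOn A f S) (hx : x ∈ S) (hy : y ∈ S)
    (h : A x - A y ∈ Ioc (-Real.pi) Real.pi) : Complex.arg (f x / f y) = A x - A y := by
  have hpolar : f x / f y =
      ((‖f x‖ / ‖f y‖ : ℝ) : ℂ) * Complex.exp ((A x - A y : ℝ) * Complex.I) := by
    push_cast
    rw [sub_mul, Complex.exp_sub, div_mul_div_comm, hA.norm_mul_exp hx, hA.norm_mul_exp hy]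
  rw [hpolar, Complex.arg_real_mul _ (div_pos (norm_pos_iff.2 (hA.ne_zero hx))
    (norm_pos_iff.2 (hA.ne_zero hy))), Complex.exp_mul_I, Complex.arg_cos_add_sin_mul_I h]

end

variable {A : ℝ → ℝ} {f : ℝ → ℂ}

lemma hasDerivWithinAt {S : Set ℝ} {s : ℝ} {f' : ℂ} (hA : IsArgBranchOn A f S)
    (hf : HasDerivWithinAt f f' S s) (hs : s ∈ S) :
    HasDerivWithinAt A (f' / f s).im S s := by
  have hfs := hA.ne_zero hs
  have hlog : HasDerivWithinAt (fun x => A s + (Complex.log (f x / f s)).im)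
      (f' / f s).im S s := by
    have h := (hf.div_const (f s)).clog_real
      (by rw [div_self hfs]; exact Complex.one_mem_slitPlane)
    rw [div_self hfs, div_one] at h
    exact (Complex.imCLM.hasFDerivAt.comp_hasDerivWithinAt s h).const_add (A s)
  refine hlog.congr_of_eventuallyEq ?_ (by simp [div_self hfs])
  have hnear : ∀ᶠ x in 𝓝[S] s, dist (A x) (A s) < Real.pi :=
    Metric.tendsto_nhds.1 (hA.continuousOn s hs) _ Real.pi_pos
  filter_upwards [hnear, self_mem_nhdsWithin] with x hx hxS
  rw [Real.dist_eq, abs_lt] at hx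
  rw [Complex.log_im, hA.arg_div hxS hs ⟨hx.1, hx.2.le⟩, add_sub_cancel]

end IsArgBranchOn

section TangentLine

lemma norm_le_four_mul_norm {E : Type*} [SeminormedAddCommGroup E] {f f₀ h : E}
    (hmin : ‖f₀‖ ≤ ‖f‖) (hf : ‖f - (f₀ + h)‖ ≤ ‖h‖ / 8) :
    ‖h‖ ≤ 4 * ‖f‖ ∧ ‖h‖ ≤ 4 * ‖f₀ + h‖ := by
  have hh : ‖h‖ ≤ ‖f‖ + ‖f₀‖ + ‖f - (f₀ + h)‖ := by
    calc ‖h‖ = ‖f - f₀ - (f - (f₀ + h))‖ := by congr 1; abel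
      _ ≤ ‖f - f₀‖ + ‖f - (f₀ + h)‖ := norm_sub_le _ _
      _ ≤ ‖f‖ + ‖f₀‖ + ‖f - (f₀ + h)‖ := by gcongr; exact norm_sub_le _ _
  have hf' : ‖f‖ ≤ ‖f - (f₀ + h)‖ + ‖f₀ + h‖ := norm_le_norm_sub_add _ _
  constructor <;> linarith [norm_nonneg h]

lemma norm_div_sub_div_le {K : Type*} [NormedField K] {f w : K} (hf : f ≠ 0) (hw : w ≠ 0)
    (g τ : K) : ‖g / f - τ / w‖ ≤ ‖g - τ‖ / ‖f‖ + ‖τ‖ * ‖f - w‖ / (‖f‖ * ‖w‖) := by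
  have h : g / f - τ / w = (g - τ) / f - τ * (f - w) / (f * w) := by
    field_simp
    ring
  rw [h]
  exact (norm_sub_le _ _).trans_eq (by simp only [norm_div, norm_mul])

lemma norm_logDeriv_sub_logDeriv_tangent_le {K : Type*} [NormedField K] {f f₀ g τ x : K} {ω : ℝ}
    (hx : x ≠ 0) (hτ : τ ≠ 0) (hmin : ‖f₀‖ ≤ ‖f‖) (hf : ‖f - (f₀ + x * τ)‖ ≤ ω * ‖x‖)
    (hg : ‖g - τ‖ ≤ ω) (hω : ω ≤ ‖τ‖ / 8) :
    ‖g / f - τ / (f₀ + x * τ)‖ ≤ 20 / ‖τ‖ * (ω / ‖x‖) := by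
  have hx' : 0 < ‖x‖ := norm_pos_iff.2 hx
  have hτ' : 0 < ‖τ‖ := norm_pos_iff.2 hτ
  have hω0 : 0 ≤ ω := (norm_nonneg _).trans hg
  obtain ⟨hfx, hwx⟩ := norm_le_four_mul_norm hmin (h := x * τ) (hf.trans (by
    rw [norm_mul]
    nlinarith))
  rw [norm_mul] at hfx hwx
  set w := f₀ + x * τ
  have hf_pos : 0 < ‖f‖ := by nlinarith [mul_pos hx' hτ']
  have hw_pos : 0 < ‖w‖ := by nlinarith [mul_pos hx' hτ']
  calc ‖g / f - τ / w‖ ≤ ‖g - τ‖ / ‖f‖ + ‖τ‖ * ‖f - w‖ / (‖f‖ * ‖w‖) :=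
        norm_div_sub_div_le (norm_pos_iff.1 hf_pos) (norm_pos_iff.1 hw_pos) g τ
    _ ≤ ω / (‖x‖ * ‖τ‖ / 4) +
          ‖τ‖ * (ω * ‖x‖) / (‖x‖ * ‖τ‖ / 4 * (‖x‖ * ‖τ‖ / 4)) := by
        gcongr <;> linarith
    _ = 20 / ‖τ‖ * (ω / ‖x‖) := by
        field_simp
        ring

variable {S : Set ℝ} {ω : ℝ → ℝ} {s₀ s : ℝ}

lemma norm_sub_tangent_le {E : Type*} [NormedAddCommGroup E] [NormedSpace ℝ E] {f f' : ℝ → E}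
    (hS : S.OrdConnected) (hω : Monotone ω)
    (hf : ∀ x ∈ S, HasDerivWithinAt f (f' x) S x)
    (hf' : ∀ x ∈ S, ∀ y ∈ S, ‖f' x - f' y‖ ≤ ω |x - y|) (hs₀ : s₀ ∈ S) (hs : s ∈ S) :
    ‖f s - (f s₀ + (s - s₀) • f' s₀)‖ ≤ ω |s - s₀| * |s - s₀| := by
  have hsub : uIcc s₀ s ⊆ S := hS.uIcc_subset hs₀ hs
  have hderiv : ∀ x ∈ uIcc s₀ s,
      HasDerivWithinAt (fun x => f x - x • f' s₀) (f' x - f' s₀) (uIcc s₀ s) x := fun x hx => by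
    simpa only [one_smul, id] using! ((hf x (hsub hx)).mono hsub).sub
      ((hasDerivWithinAt_id x (uIcc s₀ s)).smul_const (f' s₀))
  have hbound : ∀ x ∈ uIcc s₀ s, ‖f' x - f' s₀‖ ≤ ω |s - s₀| := fun x hx =>
    (hf' x (hsub hx) s₀ hs₀).trans (hω (abs_sub_left_of_mem_uIcc hx))
  have h := (convex_uIcc s₀ s).norm_image_sub_le_of_norm_hasDerivWithin_le hderiv hbound
    left_mem_uIcc right_mem_uIcc
  rw [Real.norm_eq_abs] at h
  convert h using 2
  rw [sub_smul]
  abel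

lemma norm_logDeriv_sub_logDeriv_tangent_le_of_isMinOn {f f' : ℝ → ℂ}
    (hS : S.OrdConnected) (hω : Monotone ω)
    (hf : ∀ x ∈ S, HasDerivWithinAt f (f' x) S x)
    (hf' : ∀ x ∈ S, ∀ y ∈ S, ‖f' x - f' y‖ ≤ ω |x - y|) (hs₀ : s₀ ∈ S) (hs : s ∈ S)
    (hmin : IsMinOn (fun x => ‖f x‖) S s₀) (hne : f' s₀ ≠ 0) (hωs : ω |s - s₀| ≤ ‖f' s₀‖ / 8) :
    ‖f' s / f s - f' s₀ / (f s₀ + (s - s₀ : ℝ) * f' s₀)‖ ≤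
      20 / ‖f' s₀‖ * (ω |s - s₀| / |s - s₀|) := by
  rcases eq_or_ne s s₀ with rfl | hss
  · simp
  have htaylor := norm_sub_tangent_le hS hω hf hf' hs₀ hs
  rw [← Real.norm_eq_abs (s - s₀), ← Complex.norm_real (s - s₀), Complex.real_smul] at htaylor
  rw [← Real.norm_eq_abs (s - s₀), ← Complex.norm_real (s - s₀)] at hωs ⊢
  exact norm_logDeriv_sub_logDeriv_tangent_le
    (Complex.ofReal_ne_zero.2 (sub_ne_zero.2 hss)) hne (hmin hs) htaylor
    (by simpa only [Complex.norm_real, Real.norm_eq_abs] using hf' s hs s₀ hs₀) hωs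

lemma abs_im_logDeriv_le_of_isMinOn {f f' : ℝ → ℂ} {m : ℝ}
    (hS : S.OrdConnected) (hω : Monotone ω)
    (hf : ∀ x ∈ S, HasDerivWithinAt f (f' x) S x)
    (hf' : ∀ x ∈ S, ∀ y ∈ S, ‖f' x - f' y‖ ≤ ω |x - y|) (hs₀ : s₀ ∈ S) (hs : s ∈ S)
    (hmin : IsMinOn (fun x => ‖f x‖) S s₀) (hm_pos : 0 < m) (hm : m ≤ ‖f' s₀‖)
    (hωs : ω |s - s₀| ≤ m / 8) :
    |(f' s / f s).im| ≤ |(f' s₀ / (f s₀ + (s - s₀ : ℝ) * f' s₀)).im| +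
      20 / m * (ω |s - s₀| / |s - s₀|) := by
  have hne : f' s₀ ≠ 0 := norm_pos_iff.1 (hm_pos.trans_le hm)
  have hωs_nonneg : 0 ≤ ω |s - s₀| := (norm_nonneg _).trans (hf' s hs s₀ hs₀)
  rw [← sub_le_iff_le_add']
  calc |(f' s / f s).im| - |(f' s₀ / (f s₀ + (s - s₀ : ℝ) * f' s₀)).im|
      ≤ |(f' s / f s - f' s₀ / (f s₀ + (s - s₀ : ℝ) * f' s₀)).im| := by
        rw [Complex.sub_im]
        exact abs_sub_abs_le_abs_sub _ _
    _ ≤ ‖f' s / f s - f' s₀ / (f s₀ + (s - s₀ : ℝ) * f' s₀)‖ := Complex.abs_im_le_norm _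
    _ ≤ 20 / ‖f' s₀‖ * (ω |s - s₀| / |s - s₀|) :=
        norm_logDeriv_sub_logDeriv_tangent_le_of_isMinOn hS hω hf hf' hs₀ hs hmin hne
          (hωs.trans (by gcongr))
    _ ≤ 20 / m * (ω |s - s₀| / |s - s₀|) := by gcongr

end TangentLine

theorem IsArgBranchOn.eVariationOn_Icc_le {A ω : ℝ → ℝ} {f f' : ℝ → ℂ} {c d m : ℝ}
    (hA : IsArgBranchOn A f (Icc c d))
    (hf : ∀ x ∈ Icc c d, HasDerivWithinAt f (f' x) (Icc c d) x)
    (hω : Monotone ω) (hf' : ∀ x ∈ Icc c d, ∀ y ∈ Icc c d, ‖f' x - f' y‖ ≤ ω |x - y|)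
    (hm_pos : 0 < m) (hm : ∀ x ∈ Icc c d, m ≤ ‖f' x‖) (hωm : ω (d - c) ≤ m / 8)
    (hdini : IntegrableOn (fun t => ω t / t) (Ioc 0 (d - c))) :
    eVariationOn A (Icc c d) ≤
      ENNReal.ofReal (Real.pi + 40 / m * ∫ t in Ioc 0 (d - c), ω t / t) := by
  rcases lt_or_ge d c with hdc | hcd
  · simp [Icc_eq_empty_of_lt hdc]
  obtain ⟨s₀, hs₀, hmin⟩ := isCompact_Icc.exists_isMinOn (nonempty_Icc.2 hcd)
    (f := fun s => ‖f s‖) fun s hs => (hf s hs).continuousWithinAt.norm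
  let line : ℝ → ℝ := fun s => |(f' s₀ / (f s₀ + (s - s₀ : ℝ) * f' s₀)).im|
  let remainder : ℝ → ℝ := fun s => ω |s - s₀| / |s - s₀|
  have hbound : ∀ s ∈ Icc c d, ‖(f' s / f s).im‖ ≤ line s + 20 / m * remainder s := fun s hs =>
    abs_im_logDeriv_le_of_isMinOn ordConnected_Icc hω hf hf' hs₀ hs hmin hm_pos (hm s₀ hs₀)
      ((hω (abs_sub_le_of_le_of_le hs.1 hs.2 hs₀.1 hs₀.2)).trans hωm)
  have hω_nonneg : ∀ t, 0 ≤ t → 0 ≤ ω t := fun t ht => by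
    simpa using (hf' s₀ hs₀ s₀ hs₀).trans (hω (by simpa using ht))
  have hline : IntegrableOn line (Icc c d) :=
    (integrable_abs_im_div_add_sub_mul (f s₀) (f' s₀) s₀).integrableOn
  have hline_le : ∫ s in Icc c d, line s ≤ Real.pi :=
    setIntegral_abs_im_div_add_sub_mul_le_pi (f s₀) (f' s₀) s₀ (Icc c d)
  have hremainder : IntegrableOn remainder (Icc c d) :=
    (integrableOn_comp_abs_sub hdini s₀).mono_set (Icc_subset_Icc_sub_add hs₀)
  have hremainder_le : ∫ s in Icc c d, remainder s ≤ 2 * ∫ t in Ioc 0 (d - c), ω t / t :=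
    setIntegral_Icc_comp_abs_sub_le hs₀ hdini fun t ht => div_nonneg (hω_nonneg t ht) ht
  refine (eVariationOn_Icc_le_ofReal_integral
    (fun s hs => hA.hasDerivWithinAt (hf s hs) hs)
    (hline.add (hremainder.const_mul _)) hbound).trans (ENNReal.ofReal_le_ofReal ?_)
  calc ∫ s in Icc c d, (line s + 20 / m * remainder s)
      = (∫ s in Icc c d, line s) + 20 / m * ∫ s in Icc c d, remainder s := by
        rw [integral_add hline (hremainder.const_mul _), integral_const_mul]
    _ ≤ Real.pi + 20 / m * (2 * ∫ t in Ioc 0 (d - c), ω t / t) := by gcongr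
    _ = Real.pi + 40 / m * ∫ t in Ioc 0 (d - c), ω t / t := by ring

theorem argument_variation_away_from_arc_general {z z' : ℝ → ℂ} {a b : ℝ}
    (hderiv : ∀ s ∈ Icc a b, HasDerivWithinAt z (z' s) (Icc a b) s)
    (hcont : ContinuousOn z' (Icc a b)) (hne : ∀ s ∈ Icc a b, z' s ≠ 0)
    (hdini : IntegrableOn (fun t => modCont z' a b t / t) (Ioc 0 1)) {ε : ℝ} (hε : 0 < ε) :
    ∃ δ : ℝ, 0 < δ ∧ ∀ ζ c d, Icc c d ⊆ Icc a b → d - c < δ → ∀ A : ℝ → ℝ,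
      IsArgBranchOn A (fun s => z s - ζ) (Icc c d) →
        eVariationOn A (Icc c d) ≤ ENNReal.ofReal (Real.pi + ε) := by
  obtain ⟨m, hm_pos, hm⟩ := isCompact_Icc.exists_forall_le' hcont.norm
    fun s hs => norm_pos_iff.2 (hne s hs)
  have hmod : ∀ᶠ δ in 𝓝[>] 0, modCont z' a b δ < m / 8 :=
    ((tendsto_modCont_zero hcont).mono_left nhdsWithin_le_nhds).eventually_lt_const (by positivity)
  have hint : ∀ᶠ δ in 𝓝[>] 0, 40 / m * ∫ t in Ioc 0 δ, modCont z' a b t / t < ε :=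
    ((tendsto_setIntegral_Ioc_nhdsGT one_pos hdini).const_mul (40 / m)).eventually_lt_const
      (by simpa using hε)
  obtain ⟨δ, hδm, hδε, hδ0, hδ1⟩ := (hmod.and (hint.and (Ioc_mem_nhdsGT one_pos))).exists
  refine ⟨δ, hδ0, fun ζ c d hI hlen A hA => ?_⟩
  have hdini_δ := hdini.mono_set (Ioc_subset_Ioc_right hδ1)
  have hsub : Ioc 0 (d - c) ⊆ Ioc 0 δ := Ioc_subset_Ioc_right hlen.le
  have hmono := monotone_modCont hcont
  refine (hA.eVariationOn_Icc_le (fun s hs => ((hderiv s (hI hs)).mono hI).sub_const ζ) hmono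
    (fun x hx y hy => norm_sub_le_modCont hcont (hI hx) (hI hy) le_rfl) hm_pos
    (fun s hs => hm s (hI hs)) ((hmono hlen.le).trans hδm.le) (hdini_δ.mono_set hsub)).trans
    (ENNReal.ofReal_le_ofReal ?_)
  calc Real.pi + 40 / m * ∫ t in Ioc 0 (d - c), modCont z' a b t / t
      ≤ Real.pi + 40 / m * ∫ t in Ioc 0 δ, modCont z' a b t / t := by
        gcongr
        exact ae_restrict_of_forall_mem measurableSet_Ioc fun t ht =>
          div_nonneg modCont_nonneg ht.1.le
    _ ≤ Real.pi + ε := by gcongr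

/-- Let `z : [a,b] → ℂ` be an arc-length parametrization of a Dini-smooth
Jordan arc `γ`. For every `ε > 0` there exists `δ > 0` such that for every `ζ ∈ ℂ ∖ γ` and
every interval `I = [c, d] ⊆ [a, b]` of length `< δ`, every continuous branch `A` of
`s ↦ arg (z(s) − ζ)` on `I` has total variation over `I` at most `π + ε`. -/
theorem argument_variation_away_from_arc
    (z z' : ℝ → ℂ) (a b : ℝ)
    (harc : IsDiniSmoothArc z z' a b)
    (hunit : ∀ s ∈ Set.Icc a b, ‖z' s‖ = 1) :
    ∀ ε : ℝ, 0 < ε → ∃ δ : ℝ, 0 < δ ∧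
      ∀ ζ : ℂ, ζ ∉ z '' Set.Icc a b →
        ∀ c d : ℝ, Set.Icc c d ⊆ Set.Icc a b → d - c < δ →
          ∀ A : ℝ → ℝ, ContinuousOn A (Set.Icc c d) →
            (∀ s ∈ Set.Icc c d,
              Complex.exp (Complex.I * (A s : ℂ)) = (z s - ζ) / ((‖z s - ζ‖ : ℝ) : ℂ)) →
            eVariationOn A (Set.Icc c d) ≤ ENNReal.ofReal (Real.pi + ε) := by
  intro ε hε
  obtain ⟨δ, hδ, h⟩ :=
    argument_variation_away_from_arc_general harc.deriv harc.cont harc.nonzero harc.dini hε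
  exact ⟨δ, hδ, fun ζ _ c d hI hlen A hA hexp => h ζ c d hI hlen A ⟨hA, hexp⟩⟩

end
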